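/- Let A be an abelian category with enough projectives. The assignment M ↦ Fac M is a bijection from the set of support τ-tilting subcategories M of A to the set of subcategories S satisfying S = Fac P(S) such that every projective object admits a left P(S)-approximation. -/

import Mathlib

open CategoryTheory Limits Opposite

noncomputable section

universe v u

variable {C : Type u} [Category.{v} C] [Abelian C] [EnoughProjectives C]

attribute [local instance] CategoryTheory.Abelian.hasFiniteBiproducts

/-- `Fac M`: quotients of finite direct sums of objects of `M`. -/
def Fac (M : Set C) : Set C :=
  {X | ∃ (n : ℕ) (f : Fin n → C), (∀ i, f i ∈ M) ∧
    haveI : HasBiproductsOfShape (Fin n) C := HasFiniteBiproducts.out n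
    ∃ e : (⨁ f) ⟶ X, Epi e}

/-- Vanishing of `Ext¹(X, Y)`. -/
def ext1Zero (X Y : C) : Prop := Subsingleton (((Ext ℤ C 1).obj (op X)).obj Y)

/-- Vanishing of `Ext²(X, Y)`. -/
def ext2Zero (X Y : C) : Prop := Subsingleton (((Ext ℤ C 2).obj (op X)).obj Y)

/-- `v : P ⟶ V₀` is a left `M`-approximation. -/
def IsLeftApprox (M : Set C) {P V₀ : C} (v : P ⟶ V₀) : Prop :=
  ∀ V' ∈ M, ∀ h : P ⟶ V', ∃ t : V₀ ⟶ V', v ≫ t = h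

/-- `u : U₀ ⟶ X` is a right `M`-approximation. -/
def IsRightApprox (M : Set C) {U₀ X : C} (u : U₀ ⟶ X) : Prop :=
  ∀ M' ∈ M, ∀ h : M' ⟶ X, ∃ t : M' ⟶ U₀, t ≫ u = h

/-- The Ext-projective objects of `S`. -/
def ExtProj (S : Set C) : Set C := {D ∈ S | ∀ Z ∈ S, ext1Zero D Z}

/-- `M` is τ-rigid: `Ext¹(M, Fac M) = 0`. -/
def TauRigid (M : Set C) : Prop := ∀ M₀ ∈ M, ∀ X ∈ Fac M, ext1Zero M₀ X

/-- `P` admits an exact sequence `P ⟶ Ma ⟶ Mb ⟶ 0` with `Ma, Mb ∈ M` and the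
first map a left `M`-approximation. -/
def HasApproxSeq (M : Set C) (P : C) : Prop :=
  ∃ M₀ ∈ M, ∃ M₁ ∈ M, ∃ (m : P ⟶ M₀) (g : M₀ ⟶ M₁) (w : m ≫ g = 0),
    (ShortComplex.mk m g w).Exact ∧ Epi g ∧ IsLeftApprox M m

/-- `M` is a support τ-tilting subcategory. -/
def SupportTauTilting (M : Set C) : Prop :=
  TauRigid M ∧ ∀ P : C, Projective P → HasApproxSeq M P

/-- `0 ⟶ X ⟶ Y ⟶ Z ⟶ 0` is a short exact sequence. -/
def SES {X Y Z : C} (f : X ⟶ Y) (g : Y ⟶ Z) : Prop :=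
  ∃ w : f ≫ g = 0, (ShortComplex.mk f g w).Exact ∧ Mono f ∧ Epi g

/-- `U` is hereditary: `Ext²(U, −) = 0`. -/
def Hereditary1 (U : Set C) : Prop := ∀ U₀ ∈ U, ∀ X : C, ext2Zero U₀ X

/-- `U` is partial tilting. -/
def PartialTilting (U : Set C) : Prop :=
  Hereditary1 U ∧ ∀ U₀ ∈ U, ∀ U₁ ∈ U, ext1Zero U₀ U₁

/-- `U` is tilting. -/
def Tilting (U : Set C) : Prop :=
  PartialTilting U ∧ ∀ P : C, Projective P →
    ∃ Ua ∈ U, ∃ Ub ∈ U, ∃ (i : P ⟶ Ua) (p : Ua ⟶ Ub), SES i p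

/-- `U^⊥₁ = {X | Ext¹(U, X) = 0}`. -/
def Perp1 (U : Set C) : Set C := {X | ∀ U₀ ∈ U, ext1Zero U₀ X}

/-- `M` is closed under finite direct sums and direct summands. -/
def AdditivelyClosed (M : Set C) : Prop :=
  (∀ (n : ℕ) (f : Fin n → C), (∀ i, f i ∈ M) →
    haveI : HasBiproductsOfShape (Fin n) C := HasFiniteBiproducts.out n
    (⨁ f) ∈ M) ∧
  (∀ M₀ ∈ M, ∀ (X : C) (r : M₀ ⟶ X) (s : X ⟶ M₀), s ≫ r = 𝟙 X → X ∈ M)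

/-- The additive closure of a class of objects: direct summands of finite
direct sums of its objects. -/
def AddClosure (X : Set C) : Set C :=
  {Y | ∃ (n : ℕ) (f : Fin n → C), (∀ i, f i ∈ X) ∧
    haveI : HasBiproductsOfShape (Fin n) C := HasFiniteBiproducts.out n
    ∃ (r : (⨁ f) ⟶ Y) (s : Y ⟶ ⨁ f), s ≫ r = 𝟙 Y}

/-!
The inverse map is `ExtProj`. Let `D` be Ext-projective in `Fac M`, let `Q ⟶ P ⟶ D ⟶ 0` be a
projective presentation, and push `Q ⟶ P` out along a left `M`-approximation `Q ⟶ N₀` with cokernel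
`N₁` in `M`. The pushout `E` sits in exact sequences `N₀ ⟶ E ⟶ D ⟶ 0` and `P ⟶ E ⟶ N₁ ⟶ 0`. By
τ-rigidity the first one puts `E` in `Fac M`, as in the horseshoe lemma. Moreover `P ⟶ E` is a left
`M`-approximation, so comparing it with an approximation `P ⟶ M₀` makes `E` a summand of `M₀ ⊞ N₁`,
as in Schanuel's lemma, whence `E` lies in `M`. Finally `E ⟶ D` splits, because its kernel is a
quotient of `N₀`; so `D` lies in `M`.

Conversely, the cokernel of a left `S`-approximation `P ⟶ D` with `D` in `ExtProj S` is again in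
`ExtProj S` by the long exact sequence, provided `S` is closed under quotients.
-/

section Abelian

variable {𝒜 : Type*} [Category* 𝒜] [Abelian 𝒜]

theorem exists_exact_inl_of_isPushout {X Y Z W Q : 𝒜} {f : X ⟶ Y} {g : X ⟶ Z} {inl : Y ⟶ W}
    {inr : Z ⟶ W} (sq : IsPushout f g inl inr) {p : Z ⟶ Q} [Epi p] {w : g ≫ p = 0}
    (hp : (ShortComplex.mk g p w).Exact) :
    ∃ (q : W ⟶ Q) (hq : inl ≫ q = 0), (ShortComplex.mk inl q hq).Exact ∧ Epi q := by
  let q : W ⟶ Q := sq.desc 0 p (by rw [w, comp_zero])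
  have hl : inl ≫ q = 0 := sq.inl_desc _ _ _
  have hr : inr ≫ q = p := sq.inr_desc _ _ _
  have : Epi q := epi_of_epi_fac hr
  refine ⟨q, hl, ShortComplex.exact_of_g_is_cokernel _
    (CokernelCofork.IsColimit.ofπ' q hl fun k hk => ?_), this⟩
  have hgk : g ≫ inr ≫ k = 0 := by rw [← sq.w_assoc, hk, comp_zero]
  have hpd : p ≫ hp.desc _ hgk = inr ≫ k := hp.g_desc _ hgk
  exact ⟨hp.desc _ hgk, sq.hom_ext (by rw [reassoc_of% hl, zero_comp, hk])
    (by rw [reassoc_of% hr, hpd])⟩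

theorem epi_biprod_desc_of_exact {S : ShortComplex 𝒜} (hS : S.Exact) [Epi S.g] {X : 𝒜}
    (h : X ⟶ S.X₂) [Epi (h ≫ S.g)] : Epi (biprod.desc S.f h) := by
  refine (Preadditive.epi_iff_cancel_zero _).2 fun T z hz => ?_
  have hfz : S.f ≫ z = 0 := by simpa using biprod.inl ≫= hz
  have hhz : h ≫ z = 0 := by simpa using biprod.inr ≫= hz
  have hdesc : hS.desc z hfz = 0 := by
    rw [← cancel_epi (h ≫ S.g), Category.assoc, hS.g_desc, hhz, comp_zero]
  rw [← hS.g_desc z hfz, hdesc, comp_zero]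

theorem nonempty_retract_biprod_of_exact {S : ShortComplex 𝒜} (hS : S.Exact) [Epi S.g] {X : 𝒜}
    (v : S.X₂ ⟶ X) (u : X ⟶ S.X₂) (h : S.f ≫ v ≫ u = S.f) :
    Nonempty (Retract S.X₂ (X ⊞ S.X₃)) := by
  have hz : S.f ≫ (𝟙 _ - v ≫ u) = 0 := by
    rw [Preadditive.comp_sub, h, Category.comp_id, sub_self]
  exact ⟨{
    i := biprod.lift v S.g
    r := biprod.desc u (hS.desc _ hz)
    retract := by rw [biprod.lift_desc, hS.g_desc, add_sub_cancel] }⟩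

end Abelian

section LeftApproximation

variable {𝒜 : Type*} [Category* 𝒜] {M : Set 𝒜}

theorem IsLeftApprox.of_isPushout {X Y Z W : 𝒜} {f : X ⟶ Y} {g : X ⟶ Z} {inl : Y ⟶ W}
    {inr : Z ⟶ W} (hf : IsLeftApprox M f) (sq : IsPushout f g inl inr) : IsLeftApprox M inr := by
  intro V hV h
  obtain ⟨t, ht⟩ := hf V hV (g ≫ h)
  exact ⟨sq.desc t h ht, sq.inr_desc t h ht⟩

theorem IsLeftApprox.fac [Abelian 𝒜] {P N : 𝒜} [Projective P] {m : P ⟶ N}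
    (hm : IsLeftApprox M m) : IsLeftApprox (Fac M) m := by
  rintro X ⟨n, f, hf, e, he⟩ h
  choose t ht using fun i => hm (f i) (hf i) (Projective.factorThru h e ≫ biproduct.π f i)
  refine ⟨biproduct.lift t ≫ e, ?_⟩
  have hlift : m ≫ biproduct.lift t = Projective.factorThru h e := by
    ext i
    simpa using ht i
  rw [reassoc_of% hlift, Projective.factorThru_comp]

end LeftApproximation

section Fac

variable {𝒜 : Type*} [Category* 𝒜] [Abelian 𝒜] {M : Set 𝒜}

theorem subset_fac : M ⊆ Fac M := fun X hX =>
  ⟨1, fun _ => X, fun _ => hX, biproduct.π (fun _ : Fin 1 => X) 0, inferInstance⟩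

theorem mem_fac_of_epi {X Y : 𝒜} (hX : X ∈ Fac M) (e : X ⟶ Y) [Epi e] : Y ∈ Fac M := by
  obtain ⟨n, f, hf, p, hp⟩ := hX
  exact ⟨n, f, hf, p ≫ e, epi_comp p e⟩

namespace AdditivelyClosed

theorem mem_of_retract (hM : AdditivelyClosed M) {X Y : 𝒜} (r : Retract X Y) (hY : Y ∈ M) :
    X ∈ M :=
  hM.2 Y hY X r.r r.i r.retract

theorem biprod_mem (hM : AdditivelyClosed M) {X Y : 𝒜} (hX : X ∈ M) (hY : Y ∈ M) :
    (X ⊞ Y) ∈ M := by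
  suffices H : ∀ f : Fin 2 → 𝒜, (∀ i, f i ∈ M) → (f 0 ⊞ f 1) ∈ M from
    H ![X, Y] (Fin.forall_fin_two.2 ⟨hX, hY⟩)
  intro f hf
  exact hM.mem_of_retract
    { i := biprod.desc (biproduct.ι f 0) (biproduct.ι f 1)
      r := biprod.lift (biproduct.π f 0) (biproduct.π f 1)
      retract := by ext <;> simp } (hM.1 2 f hf)

theorem mem_fac_iff (hM : AdditivelyClosed M) {X : 𝒜} :
    X ∈ Fac M ↔ ∃ N ∈ M, ∃ e : N ⟶ X, Epi e := by
  constructor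
  · rintro ⟨n, f, hf, e, he⟩
    exact ⟨⨁ f, hM.1 n f hf, e, he⟩
  · rintro ⟨N, hN, e, he⟩
    exact mem_fac_of_epi (subset_fac hN) e

theorem mem_of_isLeftApprox_fac (hM : AdditivelyClosed M) {S : ShortComplex 𝒜} (hS : S.Exact)
    [Epi S.g] (hf : IsLeftApprox M S.f) (h₂ : S.X₂ ∈ Fac M) (h₃ : S.X₃ ∈ M) {N : 𝒜} (hN : N ∈ M)
    {m : S.X₁ ⟶ N} (hm : IsLeftApprox (Fac M) m) : S.X₂ ∈ M := by
  obtain ⟨v, hv⟩ := hf N hN m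
  obtain ⟨u, hu⟩ := hm S.X₂ h₂ S.f
  obtain ⟨r⟩ := nonempty_retract_biprod_of_exact hS v u (by rw [reassoc_of% hv, hu])
  exact hM.mem_of_retract r (hM.biprod_mem hN h₃)

end AdditivelyClosed

end Fac

section Ext

variable {𝒜 : Type*} [Category* 𝒜] [Abelian 𝒜]

theorem ext1Zero_iff_subsingleton_ext [EnoughProjectives 𝒜] [HasExt 𝒜] {X Y : 𝒜} :
    ext1Zero X Y ↔ Subsingleton (Abelian.Ext X Y 1) := by
  let P := ProjectiveResolution.of X
  have hcocycle : ext1Zero X Y ↔ ∀ f : P.complex.X 1 ⟶ Y, P.complex.d 2 1 ≫ f = 0 →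
      ∃ g : P.complex.X 0 ⟶ Y, P.complex.d 1 0 ≫ g = f := by
    unfold ext1Zero
    rw [← ModuleCat.isZero_iff_subsingleton, (P.isoExt 1 Y).isZero_iff,
      ← HomologicalComplex.exactAt_iff_isZero_homology,
      HomologicalComplex.exactAt_iff' _ 0 1 2 (by simp) (by simp),
      ShortComplex.moduleCat_exact_iff]
    rfl
  rw [hcocycle]
  constructor
  · refine fun h => subsingleton_of_forall_eq 0 fun x => ?_
    obtain ⟨f, hf, rfl⟩ := P.extMk_surjective x 2 rfl
    exact (P.extMk_eq_zero_iff f 2 rfl hf 0 rfl).2 (h f hf)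
  · exact fun h f hf => (P.extMk_eq_zero_iff f 2 rfl hf 0 rfl).1 (Subsingleton.elim _ _)

variable [HasExt 𝒜]

theorem subsingleton_ext_of_retract {X X' Y : 𝒜} {n : ℕ} (r : Retract X X')
    [Subsingleton (Abelian.Ext X' Y n)] : Subsingleton (Abelian.Ext X Y n) := by
  refine subsingleton_of_forall_eq 0 fun x => ?_
  rw [← x.mk₀_id_comp, ← r.retract, ← Abelian.Ext.mk₀_comp_mk₀_assoc,
    Subsingleton.elim ((Abelian.Ext.mk₀ r.r).comp x (zero_add n)) 0, Abelian.Ext.comp_zero]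

theorem exists_lift_of_subsingleton_ext {X Y Z : 𝒜} (g : Y ⟶ Z) [Epi g]
    [Subsingleton (Abelian.Ext X (kernel g) 1)] (h : X ⟶ Z) : ∃ s : X ⟶ Y, s ≫ g = h := by
  obtain ⟨x, hx⟩ := Abelian.Ext.covariant_sequence_exact₃ X
    { exact := ShortComplex.exact_kernel g } (Abelian.Ext.mk₀ h) (zero_add 1) (by subsingleton)
  obtain ⟨s, rfl⟩ := Abelian.Ext.homEquiv₀.symm.surjective x
  exact ⟨s, Abelian.Ext.homEquiv₀.symm.injective (by simpa using hx)⟩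

theorem subsingleton_ext_one_of_exact {S : ShortComplex 𝒜} (hS : S.Exact) [Epi S.g] {Y : 𝒜}
    [Subsingleton (Abelian.Ext S.X₂ Y 1)] (h : ∀ φ : S.X₁ ⟶ Y, ∃ ψ : S.X₂ ⟶ Y, S.f ≫ ψ = φ) :
    Subsingleton (Abelian.Ext S.X₃ Y 1) := by
  let K : ShortComplex 𝒜 := .mk (kernel.ι S.g) S.g (kernel.condition S.g)
  have hK : K.ShortExact := { exact := ShortComplex.exact_kernel S.g }
  refine subsingleton_of_forall_eq 0 fun x => ?_
  obtain ⟨y, rfl⟩ := Abelian.Ext.contravariant_sequence_exact₃ hK Y x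
    (Subsingleton.elim (α := Abelian.Ext S.X₂ Y 1) _ _) (add_zero 1)
  obtain ⟨φ, rfl⟩ := Abelian.Ext.homEquiv₀.symm.surjective y
  have : Epi (kernel.lift S.g S.f S.zero) := S.exact_iff_epi_kernel_lift.1 hS
  obtain ⟨ψ, hψ⟩ := h (kernel.lift S.g S.f S.zero ≫ φ)
  have hφ : K.f ≫ ψ = φ := by
    rw [← cancel_epi (kernel.lift S.g S.f S.zero), kernel.lift_ι_assoc, hψ]
  change hK.extClass.comp (Abelian.Ext.mk₀ φ) (add_zero 1) = 0
  rw [← hφ, ← Abelian.Ext.mk₀_comp_mk₀, hK.extClass_comp_assoc]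

end Ext

theorem exists_lift_of_mem_extProj_fac {M : Set C} {D : C} (hD : D ∈ ExtProj (Fac M))
    {S : ShortComplex C} (hS : S.Exact) [Epi S.g] (h₁ : S.X₁ ∈ Fac M) (h : D ⟶ S.X₃) :
    ∃ s : D ⟶ S.X₂, s ≫ S.g = h := by
  have : Epi (kernel.lift S.g S.f S.zero) := S.exact_iff_epi_kernel_lift.1 hS
  have hK : kernel S.g ∈ Fac M := mem_fac_of_epi h₁ (kernel.lift S.g S.f S.zero)
  have := hasExt_of_enoughProjectives.{v} C
  have := ext1Zero_iff_subsingleton_ext.1 (hD.2 _ hK)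
  exact exists_lift_of_subsingleton_ext S.g h

namespace TauRigid

variable {M : Set C}

theorem subset_extProj_fac (h : TauRigid M) : M ⊆ ExtProj (Fac M) :=
  fun D hD => ⟨subset_fac hD, h D hD⟩

theorem mem_fac_of_exact (h : TauRigid M) (hM : AdditivelyClosed M) {S : ShortComplex C}
    (hS : S.Exact) [Epi S.g] (h₁ : S.X₁ ∈ Fac M) (h₃ : S.X₃ ∈ Fac M) : S.X₂ ∈ Fac M := by
  obtain ⟨N₁, hN₁, e₁, _⟩ := hM.mem_fac_iff.1 h₁
  obtain ⟨N₃, hN₃, e₃, he₃⟩ := hM.mem_fac_iff.1 h₃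
  obtain ⟨s, rfl⟩ := exists_lift_of_mem_extProj_fac (h.subset_extProj_fac hN₃) hS h₁ e₃
  have := epi_biprod_desc_of_exact hS s
  exact hM.mem_fac_iff.2 ⟨N₁ ⊞ N₃, hM.biprod_mem hN₁ hN₃,
    biprod.map e₁ (𝟙 N₃) ≫ biprod.desc S.f s, inferInstance⟩

end TauRigid

theorem extProj_fac_subset {M : Set C} (hM : AdditivelyClosed M) (hτ : SupportTauTilting M) :
    ExtProj (Fac M) ⊆ M := by
  intro D hD
  let p := Projective.π D
  obtain ⟨M₀, hM₀, -, -, m, -, -, -, -, hm⟩ := hτ.2 (Projective.over D) inferInstance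
  obtain ⟨N₀, hN₀, N₁, hN₁, n, c, _, hc, _, hn⟩ := hτ.2 (Projective.syzygies p) inferInstance
  have sq := IsPushout.of_hasPushout n (Projective.d p)
  obtain ⟨q, _, hq, _⟩ := exists_exact_inl_of_isPushout sq (exact_d_f p)
  obtain ⟨r, _, hr, _⟩ := exists_exact_inl_of_isPushout sq.flip hc
  have hE : pushout n (Projective.d p) ∈ Fac M :=
    hτ.1.mem_fac_of_exact hM hq (subset_fac hN₀) hD.1
  have hE' : pushout n (Projective.d p) ∈ M :=
    hM.mem_of_isLeftApprox_fac hr (hn.of_isPushout sq) hE hN₁ hM₀ hm.fac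
  obtain ⟨s, hs⟩ := exists_lift_of_mem_extProj_fac hD hq (subset_fac hN₀) (𝟙 D)
  exact hM.mem_of_retract ⟨s, q, hs⟩ hE'

theorem extProj_fac_eq {M : Set C} (hM : AdditivelyClosed M) (hτ : SupportTauTilting M) :
    ExtProj (Fac M) = M :=
  (extProj_fac_subset hM hτ).antisymm hτ.1.subset_extProj_fac

section GeneratedByExtProj

variable {S : Set C}

theorem tauRigid_extProj (hS : S = Fac (ExtProj S)) : TauRigid (ExtProj S) :=
  fun _ hD X hX => hD.2 X (hS ▸ hX)

theorem additivelyClosed_extProj (hS : S = Fac (ExtProj S)) : AdditivelyClosed (ExtProj S) := by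
  have := hasExt_of_enoughProjectives.{v} C
  constructor
  · intro n f hf
    refine ⟨by rw [hS]; exact ⟨n, f, hf, 𝟙 _, inferInstance⟩, fun Z hZ => ?_⟩
    have hExt : ∀ i, Subsingleton (Abelian.Ext (f i) Z 1) :=
      fun i => ext1Zero_iff_subsingleton_ext.1 ((hf i).2 Z hZ)
    exact ext1Zero_iff_subsingleton_ext.2
      (Abelian.Ext.biproductAddEquiv (biproduct.isBilimit f) Z 1).subsingleton
  · intro D hD X r s hsr
    have : IsSplitEpi r := .mk' ⟨s, hsr⟩
    refine ⟨by rw [hS]; exact mem_fac_of_epi (subset_fac hD) r, fun Z hZ => ?_⟩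
    have := ext1Zero_iff_subsingleton_ext.1 (hD.2 Z hZ)
    exact ext1Zero_iff_subsingleton_ext.2 (subsingleton_ext_of_retract ⟨s, r, hsr⟩)

theorem cokernel_mem_extProj (hS : S = Fac (ExtProj S)) {P D : C} (hD : D ∈ ExtProj S)
    {m : P ⟶ D} (hm : IsLeftApprox S m) : cokernel m ∈ ExtProj S := by
  have := hasExt_of_enoughProjectives.{v} C
  refine ⟨by rw [hS]; exact mem_fac_of_epi (subset_fac hD) (cokernel.π m), fun Z hZ => ?_⟩
  have : Subsingleton (Abelian.Ext (ShortComplex.cokernelSequence m).X₂ Z 1) :=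
    ext1Zero_iff_subsingleton_ext.1 (hD.2 Z hZ)
  exact ext1Zero_iff_subsingleton_ext.2
    (subsingleton_ext_one_of_exact (ShortComplex.cokernelSequence_exact m) (hm Z hZ))

theorem supportTauTilting_extProj (hS : S = Fac (ExtProj S))
    (h : ∀ P : C, Projective P → ∃ D ∈ ExtProj S, ∃ m : P ⟶ D, IsLeftApprox (ExtProj S) m) :
    SupportTauTilting (ExtProj S) := by
  refine ⟨tauRigid_extProj hS, fun P hP => ?_⟩
  obtain ⟨D, hD, m, hm⟩ := h P hP
  have hmS : IsLeftApprox S m := by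
    rw [hS]
    exact hm.fac
  exact ⟨D, hD, cokernel m, cokernel_mem_extProj hS hD hmS, m, cokernel.π m,
    cokernel.condition m, ShortComplex.exact_cokernel m, inferInstance, hm⟩

end GeneratedByExtProj

theorem stmt6 :
    Set.BijOn (fun M : Set C => Fac M)
      {M | AdditivelyClosed M ∧ SupportTauTilting M}
      {S | S = Fac (ExtProj S) ∧
        ∀ P : C, Projective P → ∃ D ∈ ExtProj S, ∃ m : P ⟶ D,
          IsLeftApprox (ExtProj S) m} := by
  refine Set.InvOn.bijOn (f' := ExtProj)
    ⟨fun M ⟨hM, hτ⟩ => extProj_fac_eq hM hτ, fun S ⟨hS, _⟩ => hS.symm⟩ ?_ ?_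
  · rintro M ⟨hM, hτ⟩
    simp only [Set.mem_ofPred_eq, extProj_fac_eq hM hτ, true_and]
    intro P hP
    obtain ⟨M₀, hM₀, -, -, m, -, -, -, -, hm⟩ := hτ.2 P hP
    exact ⟨M₀, hM₀, m, hm⟩
  · rintro S ⟨hS, h⟩
    exact ⟨additivelyClosed_extProj hS, supportTauTilting_extProj hS h⟩
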